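/- Let C ⊂ P³ be a smooth quintic rational curve such that every 3-secant line to C is a 4-secant line. Then C lies on a smooth quadric surface S ≅ P¹ × P¹ as a divisor of type (1,4). -/

import Mathlib

open MvPolynomial TensorProduct

/-- The binary form of degree `n` obtained by restricting a linear functional `φ` on
`ℂⁿ⁺¹` to the rational normal curve `[s : t] ↦ [sⁿ : sⁿ⁻¹t : ⋯ : tⁿ]`. -/
noncomputable def restrictForm (n : ℕ) (φ : Module.Dual ℂ (Fin (n + 1) → ℂ)) :
    MvPolynomial (Fin 2) ℂ :=
  ∑ i : Fin (n + 1), C (φ (Pi.single i 1)) * (X 0 ^ (n - (i : ℕ)) * X 1 ^ (i : ℕ))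

/-- The linear span of the divisor on the rational normal curve of degree `n` cut out by a
binary form `g`. -/
noncomputable def divisorSpan (n : ℕ) (g : MvPolynomial (Fin 2) ℂ) :
    Submodule ℂ (Fin (n + 1) → ℂ) :=
  ⨅ φ ∈ {φ : Module.Dual ℂ (Fin (n + 1) → ℂ) | g ∣ restrictForm n φ}, LinearMap.ker φ

/-- The parametrization of a quintic rational curve in `ℙ³`, as the projection of the
rational normal quintic by a linear map `A : ℂ⁶ → ℂ⁴`. -/
noncomputable def quinticCurve (A : (Fin 6 → ℂ) →ₗ[ℂ] (Fin 4 → ℂ))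
    (x : Fin 2 → ℂ) : Fin 4 → ℂ :=
  A (fun i => x 0 ^ (5 - (i : ℕ)) * x 1 ^ (i : ℕ))

/-- `L ⊂ ℙ³` is a `k`-secant line of the quintic curve: `L` meets the curve in a scheme of
length at least `k`. -/
def IsSecantLine (A : (Fin 6 → ℂ) →ₗ[ℂ] (Fin 4 → ℂ)) (k : ℕ)
    (L : Submodule ℂ (Fin 4 → ℂ)) : Prop :=
  Module.finrank ℂ L = 2 ∧
  ∃ g : MvPolynomial (Fin 2) ℂ, g.IsHomogeneous k ∧ g ≠ 0 ∧
    ∀ ψ : Module.Dual ℂ (Fin 4 → ℂ), L ≤ LinearMap.ker ψ →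
      g ∣ restrictForm 5 (ψ ∘ₗ A)


abbrev Pol := MvPolynomial (Fin 2) ℂ

/-- exponent vector of `X0^(n-i) X1^i` -/
noncomputable def mon (n i : ℕ) : Fin 2 →₀ ℕ := Finsupp.single 0 (n - i) + Finsupp.single 1 i

lemma mon_one (n i : ℕ) : mon n i 1 = i := by simp [mon]
lemma mon_zero (n i : ℕ) : mon n i 0 = n - i := by simp [mon]

lemma mon_inj {n i j : ℕ} (h : mon n i = mon n j) : i = j := by
  have := congrArg (fun f => f 1) h
  simpa [mon_one] using this

lemma mono_eq (n i : ℕ) (c : ℂ) :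
    (C c * (X 0 ^ (n - i) * X 1 ^ i) : Pol) = monomial (mon n i) c := by
  rw [mon, X_pow_eq_monomial, X_pow_eq_monomial, monomial_mul, C_mul_monomial]
  simp

lemma mon_degree {n i : ℕ} (h : i ≤ n) : (mon n i).degree = n := by
  rw [Finsupp.degree_eq_sum, Fin.sum_univ_two, mon_zero, mon_one]; omega

lemma rep {n : ℕ} {p : Pol} (hp : p.IsHomogeneous n) :
    p = ∑ i : Fin (n + 1), C (coeff (mon n i) p) * (X 0 ^ (n - (i : ℕ)) * X 1 ^ (i : ℕ)) := by
  simp only [mono_eq]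
  ext m
  rw [coeff_sum]
  simp only [coeff_monomial]
  by_cases hm : m.degree = n
  · have hs : m 0 + m 1 = n := by rw [Finsupp.degree_eq_sum, Fin.sum_univ_two] at hm; exact hm
    have hmm : mon n (m 1) = m := by
      ext j; fin_cases j
      · simp [mon_zero]; omega
      · simp [mon_one]
    rw [Finset.sum_eq_single ⟨m 1, by omega⟩]
    · simp [hmm]
    · intro b _ hb
      rw [if_neg]
      intro h
      apply hb
      ext
      simp [← h, mon_one]
    · simp
  · rw [hp.coeff_eq_zero hm, Finset.sum_eq_zero]
    intro i _
    rw [if_neg]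
    rintro rfl
    exact hm (mon_degree (by omega))

/-- the form with given coefficients -/
noncomputable def form (n : ℕ) : (Fin (n + 1) → ℂ) →ₗ[ℂ] Pol :=
  ∑ i : Fin (n + 1), (monomial (mon n i)).comp (LinearMap.proj i)

lemma form_apply (n : ℕ) (c : Fin (n + 1) → ℂ) :
    form n c = ∑ i : Fin (n + 1), monomial (mon n i) (c i) := by
  simp [form]

lemma form_hom (n : ℕ) (c : Fin (n + 1) → ℂ) : (form n c).IsHomogeneous n := by
  rw [form_apply]
  apply IsHomogeneous.sum
  intro i _
  exact isHomogeneous_monomial _ (mon_degree (by omega))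

lemma form_coeff (n : ℕ) (c : Fin (n + 1) → ℂ) (i : Fin (n + 1)) :
    coeff (mon n i) (form n c) = c i := by
  rw [form_apply, coeff_sum, Finset.sum_eq_single i]
  · simp
  · intro b _ hb
    rw [coeff_monomial, if_neg]
    intro h
    exact hb (Fin.ext (mon_inj h))
  · simp

lemma rep' {n : ℕ} {p : Pol} (hp : p.IsHomogeneous n) :
    form n (fun i => coeff (mon n i) p) = p := by
  conv_rhs => rw [rep hp]
  simp only [mono_eq, form_apply]

lemma restrictForm_eq (n : ℕ) (φ : Module.Dual ℂ (Fin (n + 1) → ℂ)) :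
    restrictForm n φ = form n (fun i => φ (Pi.single i 1)) := by
  simp only [restrictForm, mono_eq, form_apply]

/-- binary forms of degree `n` -/
abbrev SS (n : ℕ) : Submodule ℂ Pol := homogeneousSubmodule (Fin 2) ℂ n

noncomputable def formEquiv (n : ℕ) : (Fin (n + 1) → ℂ) ≃ₗ[ℂ] SS n :=
  LinearEquiv.ofBijective ((form n).codRestrict (SS n) (fun c => form_hom n c)) (by
    constructor
    · intro c d h
      have h' : form n c = form n d := congrArg Subtype.val h
      ext i
      rw [← form_coeff n c i, h', form_coeff]
    · rintro ⟨p, hp⟩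
      exact ⟨fun i => coeff (mon n i) p, Subtype.ext (rep' hp)⟩)

instance (n : ℕ) : FiniteDimensional ℂ (SS n) := (formEquiv n).finiteDimensional

lemma finrank_SS (n : ℕ) : Module.finrank ℂ (SS n) = n + 1 := by
  rw [← (formEquiv n).finrank_eq]; simp

/-- quotient of homogeneous by homogeneous -/
lemma quot_hom {n k : ℕ} {p l c : Pol} (hp : p.IsHomogeneous (k + n)) (hl : l.IsHomogeneous k)
    (hl0 : l ≠ 0) (h : p = l * c) : c.IsHomogeneous n := by
  let := gradedAlgebra (σ := Fin 2) (R := ℂ)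
  have h1 := DirectSum.coe_decompose_mul_of_left_mem_of_le (homogeneousSubmodule (Fin 2) ℂ)
    (a := l) (b := c) (i := k) (n := k + n) hl (by omega)
  rw [← h, DirectSum.decompose_of_mem_same _ hp, h] at h1
  have h2 := mul_left_cancel₀ hl0 h1
  have h3 := ((DirectSum.decompose (homogeneousSubmodule (Fin 2) ℂ) c) (k + n - k)).2
  rw [← h2, show k + n - k = n by omega] at h3
  exact h3

/-- the linear form vanishing at `y` -/
noncomputable def lin (y : Fin 2 → ℂ) : Pol := C (y 0) * X 1 - C (y 1) * X 0

lemma lin_hom (y : Fin 2 → ℂ) : (lin y).IsHomogeneous 1 :=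
  (isHomogeneous_C_mul_X _ _).sub (isHomogeneous_C_mul_X _ _)

lemma lin_ne {y : Fin 2 → ℂ} (hy : y ≠ 0) : lin y ≠ 0 := by
  intro h
  apply hy
  have h0 := congrArg (eval ![0, 1]) h
  have h1 := congrArg (eval ![1, 0]) h
  simp [lin] at h0 h1
  ext i; fin_cases i <;> simp [h0, h1]

lemma exists_root {n : ℕ} (hn : 0 < n) {p : Pol} (hp : p.IsHomogeneous n) :
    ∃ y : Fin 2 → ℂ, y ≠ 0 ∧ eval y p = 0 := by
  set P : Polynomial ℂ := aeval ![1, Polynomial.X] p with hP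
  have hev : ∀ t, P.eval t = eval ![1, t] p := by
    intro t
    rw [hP, rep hp]
    simp [Polynomial.eval_finsetSum]
  by_cases hd : P.degree = 0
  · refine ⟨![0, 1], by intro h; simpa using congrFun h 1, ?_⟩
    have hPr : P = ∑ i : Fin (n + 1), Polynomial.C (coeff (mon n i) p) * Polynomial.X ^ (i : ℕ) := by
      conv_lhs => rw [hP, rep hp]
      simp
    have hc : P.coeff n = coeff (mon n n) p := by
      rw [hPr, Polynomial.finsetSum_coeff, Finset.sum_eq_single (Fin.last n)]
      · simp
      · intro b _ hb
        rw [Polynomial.coeff_C_mul_X_pow, if_neg]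
        intro h
        exact hb (Fin.ext (by simp [← h]))
      · simp
    have : P.coeff n = 0 := Polynomial.coeff_eq_zero_of_degree_lt (by rw [hd]; exact_mod_cast hn)
    rw [rep hp]
    simp only [map_sum, map_mul, eval_C, map_pow, eval_X]
    rw [Fin.sum_univ_castSucc, Finset.sum_eq_zero]
    · simp [← hc, this]
    · intro i _
      have : n - (i : ℕ) ≠ 0 := by have := i.2; omega
      simp [this]
  · obtain ⟨t, ht⟩ := IsAlgClosed.exists_root P hd
    refine ⟨![1, t], by intro h; simpa using congrFun h 0, ?_⟩
    rw [← hev]; exact ht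

lemma aeval_scale {B : Type*} [CommRing B] [Algebra ℂ B] {n : ℕ} {p : Pol} (hp : p.IsHomogeneous n)
    (k : B) (v : Fin 2 → B) : aeval (fun i => k * v i) p = k ^ n * aeval v p := by
  rw [rep hp]
  simp only [map_sum, map_mul, map_pow, aeval_X, aeval_C, Finset.mul_sum]
  refine Finset.sum_congr rfl fun i _ => ?_
  have : k ^ n = k ^ (n - (i : ℕ)) * k ^ (i : ℕ) := by rw [← pow_add]; congr 1; omega
  rw [this]; ring

lemma factor {n : ℕ} {p : Pol} (hp : p.IsHomogeneous (n + 1)) {y : Fin 2 → ℂ} (hy : y ≠ 0)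
    (h : eval y p = 0) : ∃ c : Pol, c.IsHomogeneous n ∧ p = lin y * c := by
  suffices hd : lin y ∣ p by
    obtain ⟨c, hc⟩ := hd
    exact ⟨c, quot_hom (by rwa [add_comm] at hp) (lin_hom y) (lin_ne hy) hc, hc⟩
  rw [← Ideal.mem_span_singleton, ← Ideal.Quotient.eq_zero_iff_mem]
  set I := Ideal.span {lin y}
  have hl : Ideal.Quotient.mk I (lin y) = 0 :=
    Ideal.Quotient.eq_zero_iff_mem.2 (Ideal.mem_span_singleton_self _)
  set x : Fin 2 → Pol ⧸ I := fun i => Ideal.Quotient.mk I (X i) with hx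
  have hmk : ∀ q : Pol, Ideal.Quotient.mk I q = aeval x q := by
    intro q
    have : (Ideal.Quotient.mkₐ ℂ I) = aeval x := by
      ext i; simp [hx]
    rw [← this]; rfl
  have hrel : algebraMap ℂ (Pol ⧸ I) (y 0) * x 1 = algebraMap ℂ (Pol ⧸ I) (y 1) * x 0 := by
    rw [hmk] at hl
    simp [lin] at hl
    linear_combination hl
  have hy' : aeval (fun i => algebraMap ℂ (Pol ⧸ I) (y i)) p = 0 := by
    have := aeval_algebraMap_apply (B := Pol ⧸ I) y p
    rw [show (fun i => algebraMap ℂ (Pol ⧸ I) (y i)) = (algebraMap ℂ (Pol ⧸ I)) ∘ y from rfl] 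
    rw [this, aeval_eq_eval, h, map_zero]
  have key : ∀ i : Fin 2, (fun j => algebraMap ℂ (Pol ⧸ I) (y i) * x j)
      = fun j => x i * algebraMap ℂ (Pol ⧸ I) (y j) := by
    intro i; funext j
    fin_cases i <;> fin_cases j <;> simp
    · ring
    · rw [hrel]; ring
    · rw [← hrel]; ring
    · ring
  obtain ⟨i, hi⟩ : ∃ i, y i ≠ 0 := by
    by_contra hne; push Not at hne; exact hy (funext hne)
  have h1 := aeval_scale hp (algebraMap ℂ (Pol ⧸ I) (y i)) x
  rw [key i, aeval_scale hp, hy', mul_zero, ← hmk] at h1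
  have hu : IsUnit ((algebraMap ℂ (Pol ⧸ I) (y i)) ^ (n + 1)) :=
    ((IsUnit.mk0 _ hi).map (algebraMap ℂ (Pol ⧸ I))).pow _
  exact (hu.mul_right_eq_zero).1 h1.symm


/-- pairing between `ℂ⁶` and quintic forms -/
noncomputable def pr (u : Fin 6 → ℂ) : Pol →ₗ[ℂ] ℂ :=
  ∑ i : Fin 6, u i • lcoeff ℂ (mon 5 i)

lemma pr_apply (u : Fin 6 → ℂ) (p : Pol) : pr u p = ∑ i : Fin 6, u i * coeff (mon 5 i) p := by
  simp [pr]

lemma pr_add (u v : Fin 6 → ℂ) (p : Pol) : pr (u + v) p = pr u p + pr v p := by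
  simp [pr_apply, add_mul, Finset.sum_add_distrib]

lemma pr_smul (k : ℂ) (v : Fin 6 → ℂ) (p : Pol) : pr (k • v) p = k * pr v p := by
  simp [pr_apply, mul_assoc, Finset.mul_sum]

lemma pr_restrict (u : Fin 6 → ℂ) (φ : Module.Dual ℂ (Fin 6 → ℂ)) :
    pr u (restrictForm 5 φ) = φ u := by
  rw [pr_apply, restrictForm_eq]
  simp only [form_coeff]
  conv_rhs => rw [← Finset.univ_sum_single u]
  rw [map_sum]
  refine Finset.sum_congr rfl fun i _ => ?_
  rw [← smul_eq_mul, ← map_smul]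
  congr 1
  ext j
  by_cases h : j = i
  · subst h; simp
  · simp [h]

lemma exists_restrict {p : Pol} (hp : p.IsHomogeneous 5) :
    ∃ φ : Module.Dual ℂ (Fin 6 → ℂ), restrictForm 5 φ = p := by
  refine ⟨∑ i : Fin 6, coeff (mon 5 i) p • LinearMap.proj i, ?_⟩
  rw [restrictForm_eq]
  conv_rhs => rw [← rep' hp]
  congr 1
  ext i
  simp [Pi.single_apply]

def InW (U : Submodule ℂ (Fin 6 → ℂ)) (p : Pol) : Prop := ∀ u ∈ U, pr u p = 0

lemma InW.add {U : Submodule ℂ (Fin 6 → ℂ)} {p q : Pol} (hp : InW U p) (hq : InW U q) :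
    InW U (p + q) := fun u hu => by rw [map_add, hp u hu, hq u hu, add_zero]

lemma InW.cmul {U : Submodule ℂ (Fin 6 → ℂ)} {p : Pol} (k : ℂ) (hp : InW U p) :
    InW U (C k * p) := fun u hu => by rw [← smul_eq_C_mul, map_smul, hp u hu, smul_zero]

def Smooth (U : Submodule ℂ (Fin 6 → ℂ)) : Prop :=
  ∀ q : Pol, q.IsHomogeneous 2 → q ≠ 0 → ∀ u ∈ U,
    (∀ c : Pol, c.IsHomogeneous 3 → pr u (q * c) = 0) → u = 0

lemma smooth_ker (A : (Fin 6 → ℂ) →ₗ[ℂ] (Fin 4 → ℂ))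
    (hsmooth : ∀ g : MvPolynomial (Fin 2) ℂ, g.IsHomogeneous 2 → g ≠ 0 →
      LinearMap.ker A ⊓ divisorSpan 5 g = ⊥) : Smooth (LinearMap.ker A) := by
  intro q hq hq0 u hu h
  have hm : u ∈ LinearMap.ker A ⊓ divisorSpan 5 q := by
    refine ⟨hu, ?_⟩
    rw [SetLike.mem_coe, divisorSpan]
    simp only [Submodule.mem_iInf, Set.mem_ofPred_eq, LinearMap.mem_ker]
    rintro φ ⟨c, hc⟩
    have hc3 : c.IsHomogeneous 3 := by
      refine quot_hom (k := 2) (n := 3) ?_ hq hq0 hc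
      rw [restrictForm_eq]
      exact form_hom 5 _
    rw [← pr_restrict, hc]
    exact h c hc3
  rw [hsmooth q hq hq0] at hm
  exact (Submodule.mem_bot ℂ).1 hm

lemma count {U : Submodule ℂ (Fin 6 → ℂ)} (hU : Smooth U) {q : Pol} (hq : q.IsHomogeneous 2)
    (hq0 : q ≠ 0) (P : Submodule ℂ (SS 3)) (hP : ∀ c ∈ P, InW U (q * (c : Pol))) :
    Module.finrank ℂ U + Module.finrank ℂ P ≤ 4 := by
  let T : U →ₗ[ℂ] Module.Dual ℂ (SS 3) :=
    { toFun := fun u => (pr u.1 ∘ₗ LinearMap.mulLeft ℂ q) ∘ₗ (SS 3).subtype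
      map_add' := fun u v => by ext c; simp [pr_add]
      map_smul' := fun k v => by ext c; simp [pr_smul] }
  have hT : ∀ (u : U) (c : SS 3), T u c = pr u.1 (q * (c : Pol)) := fun u c => rfl
  have hinj : Function.Injective T := by
    rw [← LinearMap.ker_eq_bot, LinearMap.ker_eq_bot']
    intro u hu
    apply Subtype.ext
    refine hU q hq hq0 u.1 u.2 fun c hc => ?_
    rw [← hT u ⟨c, hc⟩, hu]; rfl
  have hr : LinearMap.range T ≤ P.dualAnnihilator := by
    rintro _ ⟨u, rfl⟩
    rw [Submodule.mem_dualAnnihilator]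
    intro c hc
    rw [hT]
    exact hP c hc u.1 u.2
  have h1 := Submodule.finrank_mono hr
  rw [LinearMap.finrank_range_of_inj hinj] at h1
  have h2 := Subspace.finrank_add_finrank_dualAnnihilator_eq P
  rw [finrank_SS] at h2
  omega

/-- dimension ≥ 3: two elements of `W` with a common quadratic factor are proportional -/
lemma NS {U : Submodule ℂ (Fin 6 → ℂ)} (hU : Smooth U) (h3 : 3 ≤ Module.finrank ℂ U)
    {q : Pol} (hq : q.IsHomogeneous 2) (hq0 : q ≠ 0) {c d : Pol} (hc : c.IsHomogeneous 3)
    (hd : d.IsHomogeneous 3) (hqc : InW U (q * c)) (hqd : InW U (q * d)) :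
    ∃ s t : ℂ, ¬ (s = 0 ∧ t = 0) ∧ C s * c + C t * d = 0 := by
  by_contra hcon
  have hli : LinearIndependent ℂ ![(⟨c, hc⟩ : SS 3), ⟨d, hd⟩] := by
    rw [LinearIndependent.pair_iff]
    intro s t hst
    by_contra hne
    refine hcon ⟨s, t, hne, ?_⟩
    have := congrArg Subtype.val hst
    simpa [smul_eq_C_mul] using this
  have h2 := finrank_span_eq_card hli
  have := count hU hq hq0 (Submodule.span ℂ (Set.range ![(⟨c, hc⟩ : SS 3), ⟨d, hd⟩])) (by
    intro e he
    induction he using Submodule.span_induction with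
    | mem x hx =>
      obtain ⟨i, rfl⟩ := hx
      fin_cases i
      · exact hqc
      · exact hqd
    | zero => intro u _; simp
    | add x y _ _ hx hy => 
      have := hx.add hy
      rwa [← mul_add] at this
    | smul k x _ hx =>
      have := hx.cmul k
      rw [mul_left_comm, ← smul_eq_C_mul] at this
      exact this)
  rw [h2] at this
  simp at this
  omega

lemma exists_quad {g : Pol} (hg : g.IsHomogeneous 3) (hg0 : g ≠ 0) :
    ∃ l q : Pol, l.IsHomogeneous 1 ∧ q.IsHomogeneous 2 ∧ l ≠ 0 ∧ q ≠ 0 ∧ g = q * l := by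
  obtain ⟨y, hy, h⟩ := exists_root (by norm_num) hg
  obtain ⟨q, hq, h⟩ := factor hg hy h
  refine ⟨lin y, q, lin_hom y, hq, lin_ne hy, ?_, by rw [h, mul_comm]⟩
  rintro rfl
  exact hg0 (by rw [h, mul_zero])

lemma NS3 {U : Submodule ℂ (Fin 6 → ℂ)} (hU : Smooth U) (h3 : 3 ≤ Module.finrank ℂ U)
    {g : Pol} (hg : g.IsHomogeneous 3) (hg0 : g ≠ 0) {c d : Pol} (hc : c.IsHomogeneous 2)
    (hd : d.IsHomogeneous 2) (hqc : InW U (g * c)) (hqd : InW U (g * d)) :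
    ∃ s t : ℂ, ¬ (s = 0 ∧ t = 0) ∧ C s * c + C t * d = 0 := by
  obtain ⟨l, q, hl, hq, hl0, hq0, rfl⟩ := exists_quad hg hg0
  rw [mul_assoc] at hqc hqd
  obtain ⟨s, t, hst, h⟩ := NS hU h3 hq hq0 (hl.mul hc) (hl.mul hd) hqc hqd
  refine ⟨s, t, hst, mul_left_cancel₀ hl0 ?_⟩
  linear_combination h

/-- dimension ≥ 2: no cubic is apolar to all of `U` -/
lemma noCubic {U : Submodule ℂ (Fin 6 → ℂ)} (hU : Smooth U) (h2 : 2 ≤ Module.finrank ℂ U)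
    {g : Pol} (hg : g.IsHomogeneous 3) (hg0 : g ≠ 0)
    (h : ∀ c : Pol, c.IsHomogeneous 2 → InW U (g * c)) : False := by
  obtain ⟨l, q, hl, hq, hl0, hq0, rfl⟩ := exists_quad hg hg0
  let T : SS 2 →ₗ[ℂ] SS 3 :=
    (LinearMap.mulLeft ℂ l).restrict (p := SS 2) (q := SS 3) (fun c hc => hl.mul hc)
  have hinj : Function.Injective T := by
    intro a b hab
    have := congrArg Subtype.val hab
    exact Subtype.ext (mul_left_cancel₀ hl0 this)
  have := count hU hq hq0 (LinearMap.range T) (by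
    rintro _ ⟨c, rfl⟩
    have := h c.1 c.2
    rwa [mul_assoc] at this)
  rw [LinearMap.finrank_range_of_inj hinj, finrank_SS] at this
  omega


lemma rep1 {p : Pol} (hp : p.IsHomogeneous 1) : ∃ a b : ℂ, p = C a * X 0 + C b * X 1 := by
  refine ⟨coeff (mon 1 0) p, coeff (mon 1 1) p, ?_⟩
  conv_lhs => rw [rep hp]
  simp [Fin.sum_univ_two]

lemma rep3 {p : Pol} (hp : p.IsHomogeneous 3) : ∃ a b c d : ℂ,
    p = C a * X 0 ^ 3 + C b * (X 0 ^ 2 * X 1) + C c * (X 0 * X 1 ^ 2) + C d * X 1 ^ 3 := by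
  refine ⟨coeff (mon 3 0) p, coeff (mon 3 1) p, coeff (mon 3 2) p, coeff (mon 3 3) p, ?_⟩
  conv_lhs => rw [rep hp]
  simp [Fin.sum_univ_four]

section PQL
variable {U : Submodule ℂ (Fin 6 → ℂ)} {r0 r1 : Pol}

/-- The pencil condition on `(r0, r1)`. -/
structure Good (U : Submodule ℂ (Fin 6 → ℂ)) (r0 r1 : Pol) : Prop where
  sm : Smooth U
  d3 : 3 ≤ Module.finrank ℂ U
  h0 : r0.IsHomogeneous 4
  h1 : r1.IsHomogeneous 4
  w0 : InW U (X 1 * r0)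
  w1 : InW U (X 0 * r1)
  w2 : InW U (X 1 * r1 - X 0 * r0)

lemma exists_good (hU : Smooth U) (h3 : Module.finrank ℂ U = 3) :
    ∃ r0 r1 : Pol, Good U r0 r1 ∧ ¬ (r0 = 0 ∧ r1 = 0) := by
  let D : Pol →ₗ[ℂ] Module.Dual ℂ U :=
    { toFun := fun p =>
        { toFun := fun u => pr u.1 p
          map_add' := fun u v => by simp [pr_add]
          map_smul' := fun k u => by simp [pr_smul] }
      map_add' := fun p q => by ext u; simp
      map_smul' := fun k p => by ext u; simp }
  have hD : ∀ p, D p = 0 → InW U p := by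
    intro p hp u hu
    have := congrArg (fun f => f ⟨u, hu⟩) hp
    exact this
  let a := (SS 4).subtype ∘ₗ LinearMap.fst ℂ (SS 4) (SS 4)
  let b := (SS 4).subtype ∘ₗ LinearMap.snd ℂ (SS 4) (SS 4)
  let T : (SS 4 × SS 4) →ₗ[ℂ] (Module.Dual ℂ U × Module.Dual ℂ U × Module.Dual ℂ U) :=
    (D ∘ₗ LinearMap.mulLeft ℂ (X 1) ∘ₗ a).prod
      ((D ∘ₗ LinearMap.mulLeft ℂ (X 0) ∘ₗ b).prod
        (D ∘ₗ (LinearMap.mulLeft ℂ (X 1) ∘ₗ b - LinearMap.mulLeft ℂ (X 0) ∘ₗ a)))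
  have hker := LinearMap.ker_ne_bot_of_finrank_lt (f := T) (by
    simp only [Module.finrank_prod, Subspace.dual_finrank_eq, finrank_SS, h3]; norm_num)
  obtain ⟨x, hx, hx0⟩ := (Submodule.ne_bot_iff _).1 hker
  rw [LinearMap.mem_ker] at hx
  refine ⟨x.1, x.2, ⟨hU, h3.ge, x.1.2, x.2.2, hD _ ?_, hD _ ?_, hD _ ?_⟩, ?_⟩
  · exact congrArg (fun z => z.1) hx
  · exact congrArg (fun z => z.2.1) hx
  · exact congrArg (fun z => z.2.2) hx
  · rintro ⟨e1, e2⟩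
    exact hx0 (Prod.ext (Subtype.ext e1) (Subtype.ext e2))

lemma Good.noG (h : Good U r0 r1) {g p0 p1 : Pol} (hg : g.IsHomogeneous 3) (hg0 : g ≠ 0)
    (hp0 : p0.IsHomogeneous 1) (hp1 : p1.IsHomogeneous 1) (e0 : r0 = g * p0) (e1 : r1 = g * p1) :
    r0 = 0 ∧ r1 = 0 := by
  have X0 : (X 0 : Pol).IsHomogeneous 1 := isHomogeneous_X _ _
  have X1 : (X 1 : Pol).IsHomogeneous 1 := isHomogeneous_X _ _
  have w0 := h.w0
  have w1 := h.w1
  have w2 := h.w2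
  rw [e0, mul_left_comm] at w0
  rw [e1, mul_left_comm] at w1
  rw [e0, e1, mul_left_comm, mul_left_comm (X 0), ← mul_sub] at w2
  have q0 := X1.mul hp0
  have q1 := X0.mul hp1
  have q2 := (X1.mul hp1).sub (X0.mul hp0)
  obtain ⟨a, b, ep0⟩ := rep1 hp0
  obtain ⟨c, d, ep1⟩ := rep1 hp1
  obtain ⟨s, t, hst, E⟩ := NS3 h.sm h.d3 hg hg0 q0 q1 w0 w1
  obtain ⟨s', t', hst', E'⟩ := NS3 h.sm h.d3 hg hg0 q0 q2 w0 w2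
  obtain ⟨s'', t'', hst'', E''⟩ := NS3 h.sm h.d3 hg hg0 q1 q2 w1 w2
  rw [ep0, ep1] at E E' E''
  have ev : ∀ {p : Pol}, p = 0 → ∀ y, eval y p = 0 := by rintro p rfl y; simp
  have a1 := ev E ![1, 0]
  have a2 := ev E ![0, 1]
  have a3 := ev E ![1, 1]
  have b1 := ev E' ![1, 0]
  have b2 := ev E' ![0, 1]
  have b3 := ev E' ![1, 1]
  have c1 := ev E'' ![1, 0]
  have c2 := ev E'' ![0, 1]
  have c3 := ev E'' ![1, 1]
  simp only [map_add, map_mul, map_sub, eval_C, eval_X, Matrix.cons_val_zero, Matrix.cons_val_one, 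
    mul_one, mul_zero, zero_mul, one_mul, add_zero, zero_add, zero_sub, sub_zero]
    at a1 a2 a3 b1 b2 b3 c1 c2 c3
  have ha : a = 0 := by
    by_contra ha
    have ht : t' = 0 := by grind
    exact hst' (by grind)
  subst ha
  have hb : b = 0 := by
    by_contra hb
    have h1 : s = 0 := by grind
    have h2 : t' ≠ 0 := by grind
    have h3 : c = b := by
      have : t' * (c - b) = 0 := by linear_combination b3 - b1 - b2
      grind
    exact hst (by grind)
  subst hb
  have hc : c = 0 := by
    by_contra hc
    exact hst'' (by grind)
  subst hc
  have hd : d = 0 := by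
    by_contra hd
    exact hst'' (by grind)
  subst hd
  rw [e0, e1, ep0, ep1]
  simp

lemma Good.noS (h : Good U r0 r1) {s : Pol} (hs : s.IsHomogeneous 4) {α β : ℂ}
    (e0 : r0 = C α * s) (e1 : r1 = C β * s) : r0 = 0 ∧ r1 = 0 := by
  by_cases hs0 : s = 0
  · subst hs0; simp [e0, e1]
  obtain ⟨y, hy, hr⟩ := exists_root (by norm_num) hs
  obtain ⟨g, hg, e⟩ := factor hs hy hr
  refine h.noG (g := g) (p0 := C α * lin y) (p1 := C β * lin y) hg ?_ ((lin_hom y).C_mul _)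
    ((lin_hom y).C_mul _) (by rw [e0, e]; ring) (by rw [e1, e]; ring)
  rintro rfl
  exact hs0 (by rw [e]; simp)

lemma Good.prop (h : Good U r0 r1) (hne : ¬ (r0 = 0 ∧ r1 = 0)) {α β : ℂ}
    (e : C α * r0 + C β * r1 = 0) : α = 0 ∧ β = 0 := by
  by_contra hab
  apply hne
  by_cases ha : α = 0
  · have hb : β ≠ 0 := fun hb => hab ⟨ha, hb⟩
    have : r1 = 0 := by
      subst ha
      have hC : (C β : Pol) ≠ 0 := by simpa using hb
      simpa [hb] using e
    exact h.noS h.h0 (α := 1) (β := 0) (by simp) (by simp [this])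
  · refine h.noS h.h1 (α := -β / α) (β := 1) ?_ (by simp)
    have hC : (C α : Pol) ≠ 0 := by simpa using ha
    apply mul_left_cancel₀ hC
    rw [← mul_assoc, ← C_mul, mul_div_cancel₀ _ ha, C_neg]
    linear_combination e

lemma Good.inj (h : Good U r0 r1) (hne : ¬ (r0 = 0 ∧ r1 = 0)) {α β γ : ℂ}
    (e : C α * (X 1 * r0) + C β * (X 0 * r1) + C γ * (X 1 * r1 - X 0 * r0) = 0) :
    α = 0 ∧ β = 0 ∧ γ = 0 := by
  have X0 : (X 0 : Pol).IsHomogeneous 1 := isHomogeneous_X _ _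
  have X1 : (X 1 : Pol).IsHomogeneous 1 := isHomogeneous_X _ _
  have hl : lin ![0, -1] = X 0 := by simp [lin]
  have hh : (C α * r0 + C γ * r1).IsHomogeneous (3 + 1) := (h.h0.C_mul _).add (h.h1.C_mul _)
  have e' : X 1 * (C α * r0 + C γ * r1) = X 0 * (C γ * r0 - C β * r1) := by
    linear_combination e
  obtain ⟨g, hg, eg⟩ := factor hh (y := ![0, -1]) (by intro hz; simpa using congrFun hz 1) (by
    have := congrArg (eval ![0, -1]) e'
    simp at this ⊢
    linear_combination -this)
  rw [hl] at eg
  have eg' : C γ * r0 - C β * r1 = X 1 * g := by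
    apply mul_left_cancel₀ (X_ne_zero (R := ℂ) (0 : Fin 2))
    rw [← e', eg]; ring
  by_cases hdet : α * β + γ ^ 2 = 0
  · have hdet' : (C α * C β + C γ ^ 2 : Pol) = 0 := by
      rw [← C_mul, ← C_pow, ← C_add, hdet, C_0]
    have k1 : (C γ * X 0 - C α * X 1) * g = 0 := by
      linear_combination (- C γ) * eg + C α * eg' + r1 * hdet'
    have k2 : (C β * X 0 + C γ * X 1) * g = 0 := by
      linear_combination (- C β) * eg - C γ * eg' + r0 * hdet'
    by_cases hg0 : g = 0
    · subst hg0
      rw [mul_zero] at eg eg'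
      have p1 := h.prop hne eg
      have p2 := h.prop hne (α := γ) (β := -β) (by rw [C_neg]; linear_combination eg')
      exact ⟨p1.1, neg_eq_zero.1 p2.2, p1.2⟩
    · have k1' := (mul_eq_zero.1 k1).resolve_right hg0
      have k2' := (mul_eq_zero.1 k2).resolve_right hg0
      have u1 := congrArg (eval ![1, 0]) k1'
      have u2 := congrArg (eval ![0, 1]) k1'
      have u3 := congrArg (eval ![1, 0]) k2'
      simp at u1 u2 u3
      exact ⟨u2, u3, u1⟩
  · exfalso
    apply hne
    have hC : (C (α * β + γ ^ 2) : Pol) ≠ 0 := by rw [Ne, C_eq_zero]; exact hdet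
    have hi : (C (α * β + γ ^ 2) * C ((α * β + γ ^ 2)⁻¹) : Pol) = 1 := by
      rw [← C_mul, mul_inv_cancel₀ hdet, C_1]
    have hg0 : g ≠ 0 := by
      rintro rfl
      rw [mul_zero] at eg eg'
      have p1 := h.prop hne eg
      apply hdet
      rw [p1.1, p1.2]; ring
    refine h.noG hg hg0 (p0 := C ((α * β + γ ^ 2)⁻¹) * (C β * X 0 + C γ * X 1))
      (p1 := C ((α * β + γ ^ 2)⁻¹) * (C γ * X 0 - C α * X 1))
      (((X0.C_mul _).add (X1.C_mul _)).C_mul _) (((X0.C_mul _).sub (X1.C_mul _)).C_mul _) ?_ ?_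
    · apply mul_left_cancel₀ hC
      have : C (α * β + γ ^ 2) * r0 = (C β * X 0 + C γ * X 1) * g := by
        simp only [C_add, C_mul, C_pow]
        linear_combination C β * eg + C γ * eg'
      rw [this]
      linear_combination -(C β * X 0 + C γ * X 1) * g * hi
    · apply mul_left_cancel₀ hC
      have : C (α * β + γ ^ 2) * r1 = (C γ * X 0 - C α * X 1) * g := by
        simp only [C_add, C_mul, C_pow]
        linear_combination C γ * eg - C α * eg'
      rw [this]
      linear_combination -(C γ * X 0 - C α * X 1) * g * hi

lemma Good.nobase (h : Good U r0 r1) (hne : ¬ (r0 = 0 ∧ r1 = 0)) {x : Fin 2 → ℂ} (hx : x ≠ 0)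
    (v0 : eval x r0 = 0) (v1 : eval x r1 = 0) : False := by
  have X0 : (X 0 : Pol).IsHomogeneous 1 := isHomogeneous_X _ _
  have X1 : (X 1 : Pol).IsHomogeneous 1 := isHomogeneous_X _ _
  obtain ⟨s0, hs0, e0⟩ := factor h.h0 hx v0
  obtain ⟨s1, hs1, e1⟩ := factor h.h1 hx v1
  obtain ⟨β, γ, hbg, hz⟩ : ∃ β γ : ℂ, ¬ (β = 0 ∧ γ = 0) ∧
      β * eval ![1, 0] s1 - γ * eval ![1, 0] s0 = 0 := by
    by_cases hz : eval ![1, 0] s1 = 0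
    · exact ⟨1, 0, by simp, by simp [hz]⟩
    · exact ⟨eval ![1, 0] s0, eval ![1, 0] s1, fun hh => hz hh.2, by ring⟩
  have hl : lin ![1, 0] = X 1 := by simp [lin]
  have hk : (C β * s1 - C γ * s0).IsHomogeneous (2 + 1) := (hs1.C_mul _).sub (hs0.C_mul _)
  obtain ⟨k, hkh, ek⟩ := factor hk (y := ![1, 0]) (by intro hz; simpa using congrFun hz 0)
    (by simpa using hz)
  rw [hl] at ek
  have hd : (X 0 * k + C γ * s1).IsHomogeneous 3 := (X0.mul hkh).add (hs1.C_mul _)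
  have hq0 : lin x * X 1 ≠ 0 := mul_ne_zero (lin_ne hx) (X_ne_zero _)
  have eq1 : lin x * X 1 * s0 = X 1 * r0 := by rw [e0]; ring
  have eq2 : lin x * X 1 * (X 0 * k + C γ * s1) =
      C β * (X 0 * r1) + C γ * (X 1 * r1 - X 0 * r0) := by
    rw [e0, e1]; linear_combination - lin x * X 0 * ek
  obtain ⟨s, t, hst, E⟩ := NS h.sm h.d3 ((lin_hom x).mul X1) hq0 hs0 hd
    (by rw [eq1]; exact h.w0) (by rw [eq2]; exact (h.w1.cmul _).add (h.w2.cmul _))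
  have := h.inj hne (α := s) (β := t * β) (γ := t * γ) (by
    simp only [C_mul]
    linear_combination (lin x * X 1) * E - C s * eq1 - C t * eq2)
  grind

lemma Good.false (h : Good U r0 r1) (hne : ¬ (r0 = 0 ∧ r1 = 0)) : False := by
  have X0 : (X 0 : Pol).IsHomogeneous 1 := isHomogeneous_X _ _
  have X1 : (X 1 : Pol).IsHomogeneous 1 := isHomogeneous_X _ _
  -- the symmetric matrix
  obtain ⟨a, b, d, ha, hb, hd, er0, er1⟩ : ∃ a b d : Pol, a.IsHomogeneous 3 ∧ b.IsHomogeneous 3 ∧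
      d.IsHomogeneous 3 ∧ r0 = X 0 * a + X 1 * b ∧ r1 = X 0 * b + X 1 * d := by
    set b : Pol := C (eval ![1, 0] r1) * X 0 ^ 3 + C (eval ![0, 1] r0) * X 1 ^ 3 with hb
    have hbh : b.IsHomogeneous 3 := ((X0.pow 3).C_mul _).add ((X1.pow 3).C_mul _)
    have hl0 : lin ![0, -1] = X 0 := by simp [lin]
    have hl1 : lin ![1, 0] = X 1 := by simp [lin]
    have k0 : (r0 - X 1 * b).IsHomogeneous (3 + 1) := h.h0.sub (X1.mul hbh)
    have k1 : (r1 - X 0 * b).IsHomogeneous (3 + 1) := h.h1.sub (X0.mul hbh)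
    obtain ⟨a, ha, ea⟩ := factor k0 (y := ![0, -1]) (by intro hz; simpa using congrFun hz 1) (by
      have := aeval_scale h.h0 (-1 : ℂ) ![0, 1]
      have e : (fun i => (-1 : ℂ) * (![0, 1] : Fin 2 → ℂ) i) = ![0, -1] := by
        ext i; fin_cases i <;> simp
      rw [e, aeval_eq_eval, aeval_eq_eval] at this
      rw [map_sub, this, hb]
      simp
      ring)
    obtain ⟨d, hd, ed⟩ := factor k1 (y := ![1, 0]) (by intro hz; simpa using congrFun hz 0) (by
      rw [map_sub, hb]
      simp)
    rw [hl0] at ea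
    rw [hl1] at ed
    exact ⟨a, b, d, ha, hbh, hd, by linear_combination ea, by linear_combination ed⟩
  obtain ⟨a0, a1, a2, a3, ea⟩ := rep3 ha
  obtain ⟨b0, b1, b2, b3, eb⟩ := rep3 hb
  obtain ⟨d0, d1, d2, d3, ed⟩ := rep3 hd
  let cc : ℂ → ℂ → ℂ → ℂ → ℂ → ℂ → Pol := fun ak bk dk al bl dl =>
    (C ak * X 0 + C bk * X 1) * (C bl * X 0 + C dl * X 1)
      - (C al * X 0 + C bl * X 1) * (C bk * X 0 + C dk * X 1)
  have hcc : ∀ ak bk dk al bl dl, (cc ak bk dk al bl dl).IsHomogeneous 2 := by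
    intro ak bk dk al bl dl
    exact (((X0.C_mul _).add (X1.C_mul _)).mul ((X0.C_mul _).add (X1.C_mul _))).sub
      (((X0.C_mul _).add (X1.C_mul _)).mul ((X0.C_mul _).add (X1.C_mul _)))
  have m00 : (X 0 * X 0 : Pol).IsHomogeneous 2 := X0.mul X0
  have m01 : (X 0 * X 1 : Pol).IsHomogeneous 2 := X0.mul X1
  have m11 : (X 1 * X 1 : Pol).IsHomogeneous 2 := X1.mul X1
  set c01 := cc a0 b0 d0 a1 b1 d1 with e01
  set c02 := cc a0 b0 d0 a2 b2 d2 with e02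
  set c03 := cc a0 b0 d0 a3 b3 d3 with e03
  set c12 := cc a1 b1 d1 a2 b2 d2 with e12
  set c13 := cc a1 b1 d1 a3 b3 d3 with e13
  set c23 := cc a2 b2 d2 a3 b3 d3 with e23
  obtain ⟨P, hPh, eP⟩ : ∃ P : Pol, P.IsHomogeneous 4 ∧
      P = (X 0 * X 0) * c01 + (X 0 * X 1) * c02 + (X 1 * X 1) * c03 :=
    ⟨_, ((m00.mul (hcc ..)).add (m01.mul (hcc ..))).add (m11.mul (hcc ..)), rfl⟩
  obtain ⟨Q, hQh, eQ⟩ : ∃ Q : Pol, Q.IsHomogeneous 4 ∧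
      Q = (X 0 * X 0) * c02 + (X 0 * X 1) * (c03 + c12) + (X 1 * X 1) * c13 :=
    ⟨_, ((m00.mul (hcc ..)).add (m01.mul ((hcc ..).add (hcc ..)))).add (m11.mul (hcc ..)), rfl⟩
  obtain ⟨R, hRh, eR⟩ : ∃ R : Pol, R.IsHomogeneous 4 ∧
      R = (X 0 * X 0) * c03 + (X 0 * X 1) * c13 + (X 1 * X 1) * c23 :=
    ⟨_, ((m00.mul (hcc ..)).add (m01.mul (hcc ..))).add (m11.mul (hcc ..)), rfl⟩
  -- the key identity
  have key : ∀ x : Fin 2 → ℂ,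
      C (eval x d) * (X 1 * r0) - C (eval x b) * (X 1 * r1 - X 0 * r0) - C (eval x a) * (X 0 * r1)
      = lin x * -(C (x 0) ^ 2 * P + C (x 0) * C (x 1) * Q + C (x 1) ^ 2 * R) := by
    intro x
    rw [er0, er1, ea, eb, ed, eP, eQ, eR, e01, e02, e03, e12, e13, e23]
    simp only [cc, lin, map_add, map_mul, map_pow, eval_C, eval_X]
    ring
  have hE : (r1 * r1 * P - r1 * r0 * Q + r0 * r0 * R).IsHomogeneous 12 :=
    (((h.h1.mul h.h1).mul hPh).sub ((h.h1.mul h.h0).mul hQh)).add ((h.h0.mul h.h0).mul hRh)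
  obtain ⟨y, hy, hyE⟩ := exists_root (by norm_num) hE
  set x : Fin 2 → ℂ := ![- eval y r1, eval y r0] with hx
  have hx0 : x ≠ 0 := by
    intro hz
    have z0 := congrFun hz 0
    have z1 := congrFun hz 1
    simp [hx] at z0 z1
    exact h.nobase hne hy z1 z0
  have hR1h : (C (x 0) * r0 + C (x 1) * r1).IsHomogeneous (3 + 1) :=
    (h.h0.C_mul _).add (h.h1.C_mul _)
  have hR2h : (-(C (x 0) ^ 2 * P + C (x 0) * C (x 1) * Q + C (x 1) ^ 2 * R)).IsHomogeneous
      (3 + 1) := by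
    simp only [← C_pow, ← C_mul]
    exact (((hPh.C_mul _).add (hQh.C_mul _)).add (hRh.C_mul _)).neg
  obtain ⟨c, hc, ec⟩ := factor hR1h hy (by simp [hx]; ring)
  obtain ⟨c', hc', ec'⟩ := factor hR2h hy (by
    simp only [map_add, map_sub, map_mul] at hyE
    simp [hx]
    linear_combination -hyE)
  have eq1 : lin x * lin y * c = C (x 0 ^ 2) * (X 1 * r0) + C (-x 1 ^ 2) * (X 0 * r1)
      + C (x 0 * x 1) * (X 1 * r1 - X 0 * r0) := by
    rw [mul_assoc, ← ec]
    simp only [lin, C_mul, C_pow, C_neg]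
    ring
  have eq2 : lin x * lin y * c' = C (eval x d) * (X 1 * r0) + C (-eval x a) * (X 0 * r1)
      + C (- eval x b) * (X 1 * r1 - X 0 * r0) := by
    rw [mul_assoc, ← ec', ← key]
    simp only [C_neg]
    ring
  obtain ⟨s, t, hst, E⟩ := NS h.sm h.d3 ((lin_hom x).mul (lin_hom y))
    (mul_ne_zero (lin_ne hx0) (lin_ne hy)) hc hc'
    (by rw [eq1]; exact ((h.w0.cmul _).add (h.w1.cmul _)).add (h.w2.cmul _))
    (by rw [eq2]; exact ((h.w0.cmul _).add (h.w1.cmul _)).add (h.w2.cmul _))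
  obtain ⟨z1, z2, z3⟩ := h.inj hne (α := s * x 0 ^ 2 + t * eval x d)
    (β := s * (-x 1 ^ 2) + t * (- eval x a)) (γ := s * (x 0 * x 1) + t * (- eval x b)) (by
    simp only [C_add, C_mul, C_neg, C_pow] at eq1 eq2 ⊢
    linear_combination (lin x * lin y) * E - C s * eq1 - C t * eq2)
  by_cases ht : t = 0
  · have hs : s ≠ 0 := fun hs => hst ⟨hs, ht⟩
    subst ht
    apply hx0
    simp [hs] at z1 z2
    ext i; fin_cases i
    · exact z1
    · exact z2
  · refine h.nobase hne hx0 ?_ ?_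
    · apply mul_left_cancel₀ ht
      rw [er0]
      simp only [map_add, map_mul, eval_X]
      linear_combination -x 0 * z2 - x 1 * z3
    · apply mul_left_cancel₀ ht
      rw [er1]
      simp only [map_add, map_mul, eval_X]
      linear_combination -x 0 * z3 + x 1 * z1

end PQL

lemma Smooth.mono {U V : Submodule ℂ (Fin 6 → ℂ)} (hV : Smooth V) (h : U ≤ V) : Smooth U :=
  fun q hq hq0 u hu hc => hV q hq hq0 u (h hu) hc

lemma finrank_le_two {U : Submodule ℂ (Fin 6 → ℂ)} (hU : Smooth U) : Module.finrank ℂ U ≤ 2 := by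
  by_contra hcon
  obtain ⟨V, hV, hV3⟩ : ∃ V ≤ U, Module.finrank ℂ V = 3 := by
    obtain ⟨f, hf⟩ := exists_linearIndependent_of_le_finrank (R := ℂ) (M := U) (n := 3) (by omega)
    refine ⟨(Submodule.span ℂ (Set.range f)).map U.subtype, ?_, ?_⟩
    · exact Submodule.map_subtype_le _ _
    · rw [Submodule.finrank_map_subtype_eq, finrank_span_eq_card hf]; simp
  obtain ⟨r0, r1, hg, hne⟩ := exists_good (hU.mono hV) hV3
  exact hg.false hne


noncomputable def DU (U : Submodule ℂ (Fin 6 → ℂ)) : Pol →ₗ[ℂ] Module.Dual ℂ U where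
  toFun p :=
    { toFun := fun u => pr u.1 p
      map_add' := fun u v => by simp [pr_add]
      map_smul' := fun k u => by simp [pr_smul] }
  map_add' p q := by ext u; simp
  map_smul' k p := by ext u; simp

lemma DU_apply (U : Submodule ℂ (Fin 6 → ℂ)) (p : Pol) (u : U) : DU U p u = pr u.1 p := rfl

lemma restrict_lift (A : (Fin 6 → ℂ) →ₗ[ℂ] (Fin 4 → ℂ)) {p : Pol} (hp : p.IsHomogeneous 5)
    (h : InW (LinearMap.ker A) p) :
    ∃ ψ : Module.Dual ℂ (Fin 4 → ℂ), restrictForm 5 (ψ ∘ₗ A) = p := by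
  obtain ⟨φ, rfl⟩ := exists_restrict hp
  have hφ : φ ∈ (LinearMap.ker A).dualAnnihilator := by
    rw [Submodule.mem_dualAnnihilator]
    intro u hu
    rw [← pr_restrict]
    exact h u hu
  rw [← LinearMap.range_dualMap_eq_dualAnnihilator_ker] at hφ
  obtain ⟨ψ, rfl⟩ := hφ
  exact ⟨ψ, rfl⟩

lemma restrict_add (φ χ : Module.Dual ℂ (Fin 6 → ℂ)) :
    restrictForm 5 (φ + χ) = restrictForm 5 φ + restrictForm 5 χ := by
  simp only [restrictForm_eq, ← map_add]; rfl

lemma restrict_smul (k : ℂ) (φ : Module.Dual ℂ (Fin 6 → ℂ)) :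
    restrictForm 5 (k • φ) = C k * restrictForm 5 φ := by
  simp only [restrictForm_eq, ← smul_eq_C_mul, ← map_smul]; rfl

lemma restrict_zero : restrictForm 5 (0 : Module.Dual ℂ (Fin 6 → ℂ)) = 0 := by
  simpa using restrict_smul 0 0

lemma exists_apolar (u : Fin 6 → ℂ) : ∃ g : Pol, g.IsHomogeneous 3 ∧ g ≠ 0 ∧
      (∀ c : Pol, c.IsHomogeneous 2 → pr u (g * c) = 0) := by
  let T : SS 3 →ₗ[ℂ] Module.Dual ℂ (SS 2) :=
    { toFun := fun g => (pr u ∘ₗ LinearMap.mulLeft ℂ (g : Pol)) ∘ₗ (SS 2).subtype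
      map_add' := fun a b => by ext c; simp [add_mul]
      map_smul' := fun a b => by ext c; simp }
  have hker := LinearMap.ker_ne_bot_of_finrank_lt (f := T) (by
    simp only [Subspace.dual_finrank_eq, finrank_SS]; norm_num)
  obtain ⟨x, hx, hx0⟩ := (Submodule.ne_bot_iff _).1 hker
  rw [LinearMap.mem_ker] at hx
  refine ⟨x, x.2, fun h => hx0 (Subtype.ext h), fun c hc => ?_⟩
  exact congrArg (fun f => f ⟨c, hc⟩) hx

lemma exists_indep_ker {V W : Type*} [AddCommGroup V] [Module ℂ V] [AddCommGroup W] [Module ℂ W]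
    [FiniteDimensional ℂ V] (T : V →ₗ[ℂ] W) (h : 2 ≤ Module.finrank ℂ (LinearMap.ker T)) :
    ∃ c : Fin 2 → V, LinearIndependent ℂ c ∧ ∀ i, T (c i) = 0 := by
  obtain ⟨f, hf⟩ := exists_linearIndependent_of_le_finrank (R := ℂ) (M := LinearMap.ker T)
    (n := 2) h
  exact ⟨(LinearMap.ker T).subtype ∘ f, hf.map' (LinearMap.ker T).subtype (Submodule.ker_subtype _),
    fun i => (f i).2⟩

lemma exists_two (U : Submodule ℂ (Fin 6 → ℂ)) (h2 : Module.finrank ℂ U = 2)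
    (u : Fin 6 → ℂ) (hu : u ∈ U) (hu0 : u ≠ 0) (g : Pol)
    (hgu : ∀ c : Pol, c.IsHomogeneous 2 → pr u (g * c) = 0) :
    ∃ c : Fin 2 → SS 2, LinearIndependent ℂ c ∧ ∀ i, InW U (g * (c i : Pol)) := by
  obtain ⟨T, hT⟩ : ∃ T : SS 2 →ₗ[ℂ] Module.Dual ℂ U, ∀ c w, T c w = pr w.1 (g * (c : Pol)) :=
    ⟨DU U ∘ₗ LinearMap.mulLeft ℂ g ∘ₗ (SS 2).subtype, fun _ _ => rfl⟩
  have hr : LinearMap.range T ≤ (Submodule.span ℂ {(⟨u, hu⟩ : U)}).dualAnnihilator := by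
    rintro _ ⟨c, rfl⟩
    rw [Submodule.mem_dualAnnihilator]
    intro w hw
    obtain ⟨k, rfl⟩ := Submodule.mem_span_singleton.1 hw
    rw [map_smul, hT, hgu c.1 c.2, smul_zero]
  have h1 := Submodule.finrank_mono hr
  have h3 := Subspace.finrank_add_finrank_dualAnnihilator_eq (Submodule.span ℂ {(⟨u, hu⟩ : U)})
  rw [finrank_span_singleton (fun h => hu0 (congrArg Subtype.val h)), h2] at h3
  have h4 := LinearMap.finrank_range_add_finrank_ker T
  rw [finrank_SS] at h4
  obtain ⟨c, hc, hcT⟩ := exists_indep_ker T (by omega)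
  refine ⟨c, hc, fun i w hw => ?_⟩
  rw [← hT (c i) ⟨w, hw⟩, hcT, LinearMap.zero_apply]

set_option maxHeartbeats 1000000 in
lemma exists_gh (A : (Fin 6 → ℂ) →ₗ[ℂ] (Fin 4 → ℂ))
    (hsec : ∀ L : Submodule ℂ (Fin 4 → ℂ), IsSecantLine A 3 L → IsSecantLine A 4 L)
    (h2 : Module.finrank ℂ (LinearMap.ker A) = 2) (u : Fin 6 → ℂ) (hu : u ∈ LinearMap.ker A)
    (hu0 : u ≠ 0) :
    ∃ g h : Pol, g.IsHomogeneous 3 ∧ g ≠ 0 ∧ h.IsHomogeneous 4 ∧ h ≠ 0 ∧ g ∣ h ∧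
      (∀ c : Pol, c.IsHomogeneous 2 → pr u (g * c) = 0) ∧
      (∀ m : Pol, m.IsHomogeneous 1 → InW (LinearMap.ker A) (h * m)) := by
  obtain ⟨g, hg, hg0, hgu⟩ := exists_apolar u
  obtain ⟨c, hcli, hcW⟩ := exists_two (LinearMap.ker A) h2 u hu hu0 g hgu
  have hψ : ∀ i, ∃ ψ : Module.Dual ℂ (Fin 4 → ℂ), restrictForm 5 (ψ ∘ₗ A) = g * (c i : Pol) :=
    fun i => restrict_lift A (hg.mul (c i).2) (hcW i)
  choose ψ hψ using hψ
  have hlin : ∀ s t : ℂ, restrictForm 5 ((s • ψ 0 + t • ψ 1) ∘ₗ A)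
      = g * (C s * (c 0 : Pol) + C t * (c 1 : Pol)) := by
    intro s t
    rw [LinearMap.add_comp, LinearMap.smul_comp, LinearMap.smul_comp, restrict_add, restrict_smul,
      restrict_smul, hψ, hψ]
    ring
  have hcli' : ∀ s t : ℂ, C s * (c 0 : Pol) + C t * (c 1 : Pol) = 0 → s = 0 ∧ t = 0 := by
    intro s t h
    have := LinearIndependent.pair_iff (x := c 0) (y := c 1) (R := ℂ)
    have hc2 : LinearIndependent ℂ ![c 0, c 1] := by
      convert hcli using 1
      ext i; fin_cases i <;> rfl
    refine LinearIndependent.pair_iff.1 hc2 s t (Subtype.ext ?_)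
    simpa [smul_eq_C_mul] using h
  have hψli : LinearIndependent ℂ ψ := by
    have e : ψ = ![ψ 0, ψ 1] := by ext i : 1; fin_cases i <;> rfl
    rw [e, LinearIndependent.pair_iff]
    intro s t h
    have := hlin s t
    rw [h, LinearMap.zero_comp, restrict_zero] at this
    exact hcli' s t ((mul_eq_zero.1 this.symm).resolve_left hg0)
  set Φ := Submodule.span ℂ (Set.range ψ) with hΦ
  have hΦ2 : Module.finrank ℂ Φ = 2 := by rw [hΦ, finrank_span_eq_card hψli]; simp
  have hL2 : Module.finrank ℂ Φ.dualCoannihilator = 2 := by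
    have := Subspace.finrank_add_finrank_dualCoannihilator_eq Φ
    rw [hΦ2, Module.finrank_fin_fun] at this
    omega
  have hmem : ∀ χ : Module.Dual ℂ (Fin 4 → ℂ), Φ.dualCoannihilator ≤ LinearMap.ker χ ↔ χ ∈ Φ := by
    intro χ
    conv_rhs => rw [← Subspace.dualCoannihilator_dualAnnihilator_eq (W := Φ)]
    rw [Submodule.mem_dualAnnihilator]
    rfl
  obtain ⟨-, h, hh, hh0, hdiv⟩ := hsec Φ.dualCoannihilator ⟨hL2, g, hg, hg0, by
    intro χ hχ
    rw [hmem, hΦ, show Set.range ψ = {ψ 0, ψ 1} by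
      ext; simp [Fin.exists_fin_two, eq_comm], Submodule.mem_span_pair] at hχ
    obtain ⟨s, t, rfl⟩ := hχ
    rw [hlin]
    exact dvd_mul_right _ _⟩
  have hm : ∀ i, ∃ m : Pol, m.IsHomogeneous 1 ∧ g * (c i : Pol) = h * m := by
    intro i
    obtain ⟨m, hm⟩ := hdiv (ψ i) ((hmem _).2 (Submodule.subset_span ⟨i, rfl⟩))
    rw [hψ] at hm
    exact ⟨m, quot_hom (k := 4) (n := 1) (hg.mul (c i).2) hh hh0 hm, hm⟩
  obtain ⟨m0, hm0, e0⟩ := hm 0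
  obtain ⟨m1, hm1, e1⟩ := hm 1
  have hmli : ∀ s t : ℂ, C s * m0 + C t * m1 = 0 → s = 0 ∧ t = 0 := by
    intro s t hst
    apply hcli'
    apply mul_left_cancel₀ hg0
    linear_combination C s * e0 + C t * e1 + h * hst
  obtain ⟨a, b, em0⟩ := rep1 hm0
  obtain ⟨c', d, em1⟩ := rep1 hm1
  have hdet : a * d - b * c' ≠ 0 := by
    intro hdet
    have hdet' : (C a * C d - C b * C c' : Pol) = 0 := by
      rw [← C_mul, ← C_mul, ← C_sub, hdet, C_0]
    have k1 := hmli d (-b) (by rw [em0, em1, C_neg]; linear_combination X 0 * hdet')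
    have k2 := hmli c' (-a) (by rw [em0, em1, C_neg]; linear_combination -X 1 * hdet')
    have a0 : a = 0 := by simpa using k2.2
    have b0 : b = 0 := by simpa using k1.2
    have := hmli 1 0 (by rw [em0, a0, b0]; simp)
    simp at this
  have hi : (C (a * d - b * c')⁻¹ * (C a * C d - C b * C c') : Pol) = 1 := by
    rw [← C_mul, ← C_mul, ← C_sub, ← C_mul, inv_mul_cancel₀ hdet, C_1]
  set δ : Pol := C (a * d - b * c')⁻¹ with hδ
  have f0 : h * X 0 = g * (δ * (C d * (c 0 : Pol) - C b * (c 1 : Pol))) := by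
    rw [em0] at e0
    rw [em1] at e1
    linear_combination -δ * C d * e0 + δ * C b * e1 - h * X 0 * hi
  have f1 : h * X 1 = g * (δ * (C a * (c 1 : Pol) - C c' * (c 0 : Pol))) := by
    rw [em0] at e0
    rw [em1] at e1
    linear_combination -δ * C a * e1 + δ * C c' * e0 - h * X 1 * hi
  have w0 : InW (LinearMap.ker A) (h * X 0) := by
    have : h * X 0 = C (a * d - b * c')⁻¹ * (C d * (g * (c 0 : Pol)) + C (-b) * (g * (c 1 : Pol))) := by
      rw [f0, hδ, C_neg]; ring
    rw [this]
    exact (((hcW 0).cmul _).add ((hcW 1).cmul _)).cmul _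
  have w1 : InW (LinearMap.ker A) (h * X 1) := by
    have : h * X 1 = C (a * d - b * c')⁻¹ * (C a * (g * (c 1 : Pol)) + C (-c') * (g * (c 0 : Pol))) := by
      rw [f1, hδ, C_neg]; ring
    rw [this]
    exact (((hcW 1).cmul _).add ((hcW 0).cmul _)).cmul _
  refine ⟨g, h, hg, hg0, hh, hh0, ?_, hgu, ?_⟩
  · have hp : (δ * (C d * (c 0 : Pol) - C b * (c 1 : Pol))).IsHomogeneous (1 + 1) :=
      ((IsHomogeneous.C_mul (c 0).2 _).sub (IsHomogeneous.C_mul (c 1).2 _)).C_mul _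
    set p := δ * (C d * (c 0 : Pol) - C b * (c 1 : Pol))
    set p' := δ * (C a * (c 1 : Pol) - C c' * (c 0 : Pol))
    have hpp : p * X 1 = p' * X 0 := by
      apply mul_left_cancel₀ hg0
      linear_combination -X 1 * f0 + X 0 * f1
    have hl0 : lin ![0, -1] = X 0 := by simp [lin]
    obtain ⟨k, -, ek⟩ := factor hp (y := ![0, -1]) (by intro hz; simpa using congrFun hz 1) (by
      have := congrArg (eval ![0, -1]) hpp
      simpa using this)
    rw [hl0] at ek
    refine ⟨k, ?_⟩
    apply mul_left_cancel₀ (X_ne_zero (R := ℂ) (0 : Fin 2))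
    rw [ek] at f0
    linear_combination f0
  · intro m hm
    obtain ⟨s, t, rfl⟩ := rep1 hm
    rw [show h * (C s * X 0 + C t * X 1) = C s * (h * X 0) + C t * (h * X 1) by ring]
    exact (w0.cmul _).add (w1.cmul _)

/-- two independent quartics -/
lemma exists_pair (A : (Fin 6 → ℂ) →ₗ[ℂ] (Fin 4 → ℂ)) (hS : Smooth (LinearMap.ker A))
    (hsec : ∀ L : Submodule ℂ (Fin 4 → ℂ), IsSecantLine A 3 L → IsSecantLine A 4 L)
    (h2 : Module.finrank ℂ (LinearMap.ker A) = 2) :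
    ∃ h k : Pol, h.IsHomogeneous 4 ∧ k.IsHomogeneous 4 ∧
      (∀ s t : ℂ, C s * h + C t * k = 0 → s = 0 ∧ t = 0) ∧
      (∀ m : Pol, m.IsHomogeneous 1 → InW (LinearMap.ker A) (h * m)) ∧
      (∀ m : Pol, m.IsHomogeneous 1 → InW (LinearMap.ker A) (k * m)) := by
  by_contra hcon
  set U := LinearMap.ker A with hU
  obtain ⟨f, hf⟩ := exists_linearIndependent_of_le_finrank (R := ℂ) (M := U) (n := 2) h2.ge
  have hf' : LinearIndependent ℂ ![f 0, f 1] := by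
    convert hf using 1
    ext i; fin_cases i <;> rfl
  have hspan : ∀ u ∈ U, ∃ s t : ℂ, u = s • (f 0 : Fin 6 → ℂ) + t • (f 1 : Fin 6 → ℂ) := by
    intro u hu
    have htop := hf'.span_eq_top_of_card_eq_finrank (by simp [h2])
    have : (⟨u, hu⟩ : U) ∈ Submodule.span ℂ (Set.range ![f 0, f 1]) := by rw [htop]; trivial
    rw [show Set.range ![f 0, f 1] = {f 0, f 1} by
      ext; simp [or_comm], Submodule.mem_span_pair] at this
    obtain ⟨s, t, e⟩ := this
    exact ⟨s, t, by simpa using (congrArg Subtype.val e).symm⟩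
  let w : ℂ → Fin 6 → ℂ := fun t => (f 0 : Fin 6 → ℂ) + t • (f 1 : Fin 6 → ℂ)
  have hw : ∀ t, w t ∈ U := fun t => U.add_mem (f 0).2 (U.smul_mem _ (f 1).2)
  have hw0 : ∀ t, w t ≠ 0 := by
    intro t ht
    have := LinearIndependent.pair_iff.1 hf' 1 t (Subtype.ext (by simpa using ht))
    simp at this
  have hgh := fun t => exists_gh A hsec h2 (w t) (hw t) (hw0 t)
  choose g h hg hg0 hh hh0 hd hgu hhW using hgh
  have hdvd : ∀ t, g t ∣ h 0 := by
    intro t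
    by_contra hnd
    refine hcon ⟨h 0, h t, hh 0, hh t, ?_, hhW 0, hhW t⟩
    intro s r e
    by_contra hsr
    by_cases hs : s = 0
    · have hr : r ≠ 0 := fun hr => hsr ⟨hs, hr⟩
      rw [hs] at e
      have : h t = 0 := by simpa [hr] using e
      exact hh0 t this
    · apply hnd
      have hC : (C s⁻¹ * C s : Pol) = 1 := by rw [← C_mul, inv_mul_cancel₀ hs, C_1]
      have e2 : h 0 = h t * (- C s⁻¹ * C r) := by
        linear_combination C s⁻¹ * e - h 0 * hC
      rw [e2]
      exact (hd t).mul_right _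
  have hne : Associates.mk (h 0) ≠ 0 := by
    rw [Ne, Associates.mk_eq_zero]; exact hh0 0
  have : Fintype {x // x ∣ Associates.mk (h 0)} :=
    UniqueFactorizationMonoid.fintypeSubtypeDvd _ hne
  obtain ⟨t, t', htt, e⟩ := Finite.exists_ne_map_eq_of_infinite
    (fun t : ℂ => (⟨Associates.mk (g t), Associates.mk_dvd_mk.2 (hdvd t)⟩ :
      {x // x ∣ Associates.mk (h 0)}))
  have e' : Associated (g t') (g t) := (Associates.mk_eq_mk_iff_associated.1 (congrArg Subtype.val e)).symm
  obtain ⟨v, hv⟩ := e'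
  have hv0 : (v : Pol).IsHomogeneous 0 := quot_hom (k := 3) (n := 0) (hg t) (hg t') (hg0 t') hv.symm
  refine noCubic hS h2.ge (hg t) (hg0 t) ?_
  intro c hc
  have p1 : pr (w t) (g t * c) = 0 := hgu t c hc
  have p2 : pr (w t') (g t * c) = 0 := by
    rw [← hv, mul_assoc]
    refine hgu t' _ ?_
    have := hv0.mul hc
    rwa [zero_add] at this
  simp only [w, pr_add, pr_smul] at p1 p2
  have q1 : pr (f 1 : Fin 6 → ℂ) (g t * c) = 0 := by
    have : (t - t') * pr (f 1 : Fin 6 → ℂ) (g t * c) = 0 := by linear_combination p1 - p2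
    exact (mul_eq_zero.1 this).resolve_left (sub_ne_zero.2 htt)
  have q0 : pr (f 0 : Fin 6 → ℂ) (g t * c) = 0 := by
    linear_combination p1 - t * q1
  intro u hu
  obtain ⟨s, r, rfl⟩ := hspan u hu
  rw [pr_add, pr_smul, pr_smul, q0, q1]; ring

lemma indep4 {U : Submodule ℂ (Fin 6 → ℂ)} (hU : Smooth U) (h2 : 2 ≤ Module.finrank ℂ U)
    {h k : Pol} (hh : h.IsHomogeneous 4) (hk : k.IsHomogeneous 4)
    (hli : ∀ s t : ℂ, C s * h + C t * k = 0 → s = 0 ∧ t = 0)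
    (hW : ∀ m : Pol, m.IsHomogeneous 1 → InW U (h * m))
    (kW : ∀ m : Pol, m.IsHomogeneous 1 → InW U (k * m))
    {l m : Pol} (hl : l.IsHomogeneous 1) (hm : m.IsHomogeneous 1) (e : l * h + m * k = 0) :
    l = 0 ∧ m = 0 := by
  have hk0 : k ≠ 0 := by
    rintro rfl
    have := hli 0 1 (by simp)
    simp at this
  by_cases hl0 : l = 0
  · refine ⟨hl0, ?_⟩
    rw [hl0, zero_mul, zero_add] at e
    exact (mul_eq_zero.1 e).resolve_right hk0
  exfalso
  obtain ⟨y, hy, hly⟩ := exists_root one_pos hl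
  obtain ⟨l', hl', el⟩ := factor (n := 0) hl hy hly
  have hconst : ∀ p : Pol, p.IsHomogeneous 0 → ∃ κ : ℂ, p = C κ := by
    intro p hp
    exact ⟨_, by conv_lhs => rw [rep hp]; simp⟩
  obtain ⟨κ, rfl⟩ := hconst l' hl'
  have hκ : κ ≠ 0 := by
    rintro rfl
    exact hl0 (by rw [el]; simp)
  by_cases hmy : eval y m = 0
  · obtain ⟨m', hm', em⟩ := factor (n := 0) hm hy hmy
    obtain ⟨μ, rfl⟩ := hconst m' hm'
    refine hκ (hli κ μ ?_).1
    apply mul_left_cancel₀ (lin_ne hy)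
    rw [el, em] at e
    linear_combination e
  · have hky : eval y k = 0 := by
      have := congrArg (eval y) e
      simp [hly] at this
      exact this.resolve_left hmy
    obtain ⟨q, hq, eq⟩ := factor (n := 3) hk hy hky
    have hq0 : q ≠ 0 := by rintro rfl; exact hk0 (by rw [eq]; simp)
    have eh : C κ * h = - (m * q) := by
      apply mul_left_cancel₀ (lin_ne hy)
      rw [el, eq] at e
      linear_combination e
    refine noCubic hU h2 hq hq0 ?_
    intro c hc
    have hcm : (c - C (eval y c / (eval y m) ^ 2) * (m * m)).IsHomogeneous (1 + 1) :=
      hc.sub ((hm.mul hm).C_mul _)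
    obtain ⟨n, hn, en⟩ := factor hcm hy (by
      simp only [map_sub, map_mul, eval_C]
      field_simp
      ring)
    have : q * c = C (-κ * (eval y c / (eval y m) ^ 2)) * (h * m) + k * n := by
      rw [eq]
      simp only [C_mul, C_neg]
      linear_combination q * en + (C (eval y c / (eval y m) ^ 2)) * m * eh
    rw [this]
    exact ((hW m hm).cmul _).add (kW n hn)

lemma eval_restrict (φ : Module.Dual ℂ (Fin 6 → ℂ)) (x : Fin 2 → ℂ) :
    φ (fun i => x 0 ^ (5 - (i : ℕ)) * x 1 ^ (i : ℕ)) = eval x (restrictForm 5 φ) := by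
  conv_lhs => rw [← Finset.univ_sum_single (fun i : Fin 6 => x 0 ^ (5 - (i : ℕ)) * x 1 ^ (i : ℕ))]
  rw [map_sum]
  simp only [restrictForm, map_sum, map_mul, map_pow, eval_C, eval_X]
  refine Finset.sum_congr rfl fun i _ => ?_
  have hs : ∀ w : ℂ, (Pi.single i w : Fin 6 → ℂ) = w • Pi.single i 1 := by
    intro w
    ext j
    by_cases h : j = i
    · subst h; simp
    · simp [h]
  rw [hs, map_smul, smul_eq_mul, mul_comm]

/-- Let `C ⊂ ℙ³` be a smooth quintic rational curve, presented as the projection of the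
rational normal quintic `C' ⊂ ℙ⁵` from a center line (the kernel of `A : ℂ⁶ → ℂ⁴`)
meeting no secant or tangent line of `C'` (smoothness).  If every 3-secant line of `C`
is a 4-secant line, then `C` lies on a smooth quadric surface `S ≅ ℙ¹ × ℙ¹` as a divisor
of type `(1,4)`: there is a linear identification `M : ℂ⁴ ≅ ℂ² ⊗ ℂ²` (whose Segre quadric
is the smooth quadric `S`) under which the parametrization of `C` factors as
`x ↦ a(x) ⊗ b(x)` with `a` of bidegree `1` and `b` of bidegree `4` in the homogeneous
coordinates `x` of `ℙ¹`. -/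
theorem quintic_with_all_trisecants_quadrisecant_lies_on_quadric
    (A : (Fin 6 → ℂ) →ₗ[ℂ] (Fin 4 → ℂ))
    (hsmooth : ∀ g : MvPolynomial (Fin 2) ℂ, g.IsHomogeneous 2 → g ≠ 0 →
      LinearMap.ker A ⊓ divisorSpan 5 g = ⊥)
    (hsec : ∀ L : Submodule ℂ (Fin 4 → ℂ), IsSecantLine A 3 L → IsSecantLine A 4 L) :
    ∃ (M : (Fin 4 → ℂ) ≃ₗ[ℂ] TensorProduct ℂ (Fin 2 → ℂ) (Fin 2 → ℂ))
      (α : Fin 2 → Fin 2 → ℂ) (β : Fin 2 → Fin 5 → ℂ),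
      ∀ x : Fin 2 → ℂ,
        M (quinticCurve A x) =
          (fun j => α j 0 * x 0 + α j 1 * x 1) ⊗ₜ[ℂ]
          (fun j : Fin 2 => ∑ m : Fin 5, β j m * (x 0 ^ (4 - (m : ℕ)) * x 1 ^ (m : ℕ))) := by
  have hS := smooth_ker A hsmooth
  have hle := finrank_le_two hS
  have hrn := LinearMap.finrank_range_add_finrank_ker A
  have hr4 := Submodule.finrank_le (LinearMap.range A)
  simp only [Module.finrank_fin_fun] at hrn hr4
  have h2 : Module.finrank ℂ (LinearMap.ker A) = 2 := by omega
  obtain ⟨h, k, hh, hk, hli, hW, kW⟩ := exists_pair A hS hsec h2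
  let H : Fin 2 → Pol := ![h, k]
  have hHh : ∀ j, (H j).IsHomogeneous 4 := by
    intro j; fin_cases j
    · exact hh
    · exact hk
  have hHW : ∀ i j : Fin 2, InW (LinearMap.ker A) (H j * X i) := by
    intro i j; fin_cases j
    · exact hW _ (isHomogeneous_X _ _)
    · exact kW _ (isHomogeneous_X _ _)
  have hψ : ∀ ij : Fin 2 × Fin 2, ∃ ψ : Module.Dual ℂ (Fin 4 → ℂ),
      restrictForm 5 (ψ ∘ₗ A) = H ij.2 * X ij.1 :=
    fun ij => restrict_lift A ((hHh ij.2).mul (isHomogeneous_X _ _)) (hHW ij.1 ij.2)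
  choose ψ hψ using hψ
  have hψli : LinearIndependent ℂ ψ := by
    rw [Fintype.linearIndependent_iff]
    intro c hc
    have e : c (0, 0) • ψ (0, 0) + c (0, 1) • ψ (0, 1) + (c (1, 0) • ψ (1, 0) + c (1, 1) • ψ (1, 1))
        = 0 := by
      rw [← hc, Fintype.sum_prod_type]
      simp [Fin.sum_univ_two]
    have e2 : restrictForm 5 ((c (0, 0) • ψ (0, 0) + c (0, 1) • ψ (0, 1) +
        (c (1, 0) • ψ (1, 0) + c (1, 1) • ψ (1, 1))) ∘ₗ A) = 0 := by
      rw [e, LinearMap.zero_comp]; exact restrict_zero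
    rw [LinearMap.add_comp, LinearMap.add_comp, LinearMap.add_comp, LinearMap.smul_comp,
      LinearMap.smul_comp, LinearMap.smul_comp, LinearMap.smul_comp, restrict_add, restrict_add,
      restrict_add, restrict_smul, restrict_smul, restrict_smul, restrict_smul, hψ, hψ, hψ, hψ] at e2
    have X0 : (X 0 : Pol).IsHomogeneous 1 := isHomogeneous_X _ _
    have X1 : (X 1 : Pol).IsHomogeneous 1 := isHomogeneous_X _ _
    obtain ⟨z1, z2⟩ := indep4 hS h2.ge hh hk hli hW kW
      (l := C (c (0, 0)) * X 0 + C (c (1, 0)) * X 1) (m := C (c (0, 1)) * X 0 + C (c (1, 1)) * X 1)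
      ((X0.C_mul _).add (X1.C_mul _)) ((X0.C_mul _).add (X1.C_mul _)) (by
        simp only [H, Matrix.cons_val_zero, Matrix.cons_val_one] at e2
        linear_combination e2)
    have a1 := congrArg (eval ![1, 0]) z1
    have a2 := congrArg (eval ![0, 1]) z1
    have a3 := congrArg (eval ![1, 0]) z2
    have a4 := congrArg (eval ![0, 1]) z2
    simp at a1 a2 a3 a4
    rintro ⟨i, j⟩
    fin_cases i <;> fin_cases j
    · exact a1
    · exact a3
    · exact a2
    · exact a4
  let F : (Fin 4 → ℂ) →ₗ[ℂ] (Fin 2 × Fin 2 → ℂ) := LinearMap.pi ψ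
  have hF : Function.Injective F := by
    rw [← LinearMap.ker_eq_bot, LinearMap.ker_eq_bot']
    intro v hv
    rw [← Module.forall_dual_apply_eq_zero_iff ℂ v]
    intro χ
    have htop := hψli.span_eq_top_of_card_eq_finrank (by
      rw [Subspace.dual_finrank_eq]; simp)
    have hχ : χ ∈ Submodule.span ℂ (Set.range ψ) := by rw [htop]; trivial
    induction hχ using Submodule.span_induction with
    | mem x hx =>
      obtain ⟨i, rfl⟩ := hx
      exact congrFun hv i
    | zero => rfl
    | add x y _ _ hx hy => rw [LinearMap.add_apply, hx, hy, add_zero]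
    | smul a x _ hx => rw [LinearMap.smul_apply, hx, smul_zero]
  let b := (Pi.basisFun ℂ (Fin 2)).tensorProduct (Pi.basisFun ℂ (Fin 2))
  refine ⟨(LinearEquiv.ofInjectiveOfFinrankEq F hF (by simp)).trans b.equivFun.symm,
    fun i j => if i = j then 1 else 0, fun j m => coeff (mon 4 m) (H j), ?_⟩
  intro x
  rw [LinearEquiv.trans_apply, LinearEquiv.symm_apply_eq]
  ext ⟨i, j⟩
  have e1 : (LinearEquiv.ofInjectiveOfFinrankEq F hF (by simp)) (quinticCurve A x) (i, j)
      = eval x (H j * X i) := by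
    rw [← hψ (i, j), ← eval_restrict]
    rfl
  rw [e1, Module.Basis.equivFun_apply, Module.Basis.tensorProduct_repr_tmul_apply]
  conv_lhs => rw [rep (hHh j)]
  fin_cases i <;> simp [mul_comm]
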